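/- Let ψ : ℤ_{≥0} → ℝ_{>0} be non-increasing and 1 ≤ ℓ ≤ n. If ∑_{h=1}^∞ h^{n-1} ψ(h) = ∞, then the set ℒ_{n,ℓ}(ψ) of α ∈ ℝⁿ such that ‖x₁α₁ + ⋯ + xₙαₙ‖ ≤ ψ(H(x)) for infinitely many x ∈ ℤⁿ with max{|x_{ℓ+1}|,...,|xₙ|} < max{|x₁|,...,|x_ℓ|} has full Lebesgue measure (its complement has measure zero). -/

import Mathlib

open Finset MeasureTheory

/-- Distance to the nearest integer. -/
noncomputable def dnint (r : ℝ) : ℝ := |r - round r|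

/-- Height of an integer vector: maximum of absolute values of coordinates. -/
def Hgt {n : ℕ} (x : Fin n → ℤ) : ℕ := Finset.univ.sup fun i => (x i).natAbs

/-- The cone condition: the height is attained among the first `ℓ` coordinates. -/
def cone {n : ℕ} (ℓ : ℕ) (x : Fin n → ℤ) : Prop :=
  ((Finset.univ.filter fun i : Fin n => ℓ ≤ (i : ℕ)).sup fun i => (x i).natAbs) <
  ((Finset.univ.filter fun i : Fin n => (i : ℕ) < ℓ).sup fun i => (x i).natAbs)

/-- The restricted Diophantine exponent `μ_{n,ℓ}(α)`. -/
noncomputable def mu (n ℓ : ℕ) (α : Fin n → ℝ) : ℝ :=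
  sSup {m : ℝ | 0 ≤ m ∧ {x : Fin n → ℤ | cone ℓ x ∧
    0 < dnint (∑ i, (x i : ℝ) * α i) ∧
    dnint (∑ i, (x i : ℝ) * α i) ≤ (Hgt x : ℝ) ^ (-m)}.Infinite}

/-! The cone with parameter `ℓ` contains the one with parameter `1`, where the height is `|x₁|`, and
`‖x₁α₁ + ⋯ + xₙαₙ‖` depends only on the class of `α` in the torus `ℝⁿ / ℤⁿ`. On the torus, and with
`ψ` truncated at `1 / 2`, the events `‖x · α‖ ≤ ψ (H x)` have measure `2 ψ (H x)`, and they are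
independent for non-proportional `x`.

For `n ≥ 2` there are `φ(h) h ^ (n - 2)` vectors of height `h` in the cone with `x₁ = h` coprime to
`x₂` and nonnegative coordinates; no two of them, of any heights, are proportional. As `φ(h) / h` is
bounded below on average, their measures have a divergent sum, and Borel–Cantelli for pairwise
independent events, obtained from the Chung–Erdős inequality, gives full measure.

For `n = 1` independence is lost. The neighbourhoods `E q` of the reduced fractions with
denominator `q` satisfy `|E q ∩ E r| ≤ 8 ψ(q) ψ(r)`, which through the same inequality only gives a
limsup set of positive measure; Gallagher's zero-one law makes the measure full.
-/

section KochenStone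

variable {Ω ι κ : Type*} {E : ι → Set Ω}

lemma tendsto_sum_atTop_of_not_summable {f : ι → ℝ} (hf : ∀ i, 0 ≤ f i) (hsum : ¬ Summable f) :
    Filter.Tendsto (fun s : Finset ι => ∑ i ∈ s, f i) Filter.atTop Filter.atTop := by
  refine Filter.tendsto_atTop_atTop_of_monotone
    (fun s t hst => sum_le_sum_of_subset_of_nonneg hst fun i _ _ => hf i) fun c => ?_
  by_contra! hlt
  exact hsum (summable_of_sum_le hf fun s => (hlt s).le)

lemma sum_product_self_le_add_mul_sq {F : Finset ι} {m : ι → ι → ℝ} {s w : ι → ℝ} {c : ℝ}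
    (hc : 0 ≤ c) (hdiag : ∀ i ∈ F, m i i ≤ s i)
    (hoff : ∀ i ∈ F, ∀ j ∈ F, i ≠ j → m i j ≤ c * (w i * w j)) :
    ∑ p ∈ F ×ˢ F, m p.1 p.2 ≤ ∑ i ∈ F, s i + c * (∑ i ∈ F, w i) ^ 2 := by
  classical
  have hterm : ∀ i ∈ F, ∀ j ∈ F, m i j ≤ (if i = j then s i else 0) + c * (w i * w j) := by
    intro i hi j hj
    split_ifs with h
    · subst h
      exact (hdiag i hi).trans (le_add_of_nonneg_right (mul_nonneg hc (mul_self_nonneg _)))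
    · rw [zero_add]
      exact hoff i hi j hj h
  calc ∑ p ∈ F ×ˢ F, m p.1 p.2
      ≤ ∑ p ∈ F ×ˢ F, ((if p.1 = p.2 then s p.1 else 0) + c * (w p.1 * w p.2)) :=
        sum_le_sum fun p hp => hterm _ (mem_product.1 hp).1 _ (mem_product.1 hp).2
    _ = ∑ i ∈ F, s i + c * (∑ i ∈ F, w i) ^ 2 := by
        rw [sum_add_distrib, sum_product, ← mul_sum, sq, sum_mul_sum, sum_product]
        exact congrArg (· + _) (sum_congr rfl fun i hi => by rw [sum_ite_eq, if_pos hi])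

lemma sq_sum_indicator_one (F : Finset ι) (ω : Ω) :
    (∑ i ∈ F, (E i).indicator (1 : Ω → ℝ) ω) ^ 2 =
      ∑ p ∈ F ×ˢ F, (E p.1 ∩ E p.2).indicator 1 ω := by
  rw [sq, sum_mul_sum, sum_product]
  exact sum_congr rfl fun i _ => sum_congr rfl fun j _ => by
    rw [Set.inter_indicator_one, Pi.mul_apply]

lemma setOf_infinite_eq_iInter_biUnion_notMem (E : ι → Set Ω) :
    {ω | {i | ω ∈ E i}.Infinite} = ⋂ s : Finset ι, ⋃ i ∉ s, E i := by
  ext ω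
  simp only [Set.mem_ofPred_eq, Set.mem_iInter, Set.mem_iUnion, exists_prop]
  refine ⟨fun hinf s => ?_, fun h hfin => ?_⟩
  · obtain ⟨i, hi, his⟩ := hinf.exists_notMem_finset s
    exact ⟨i, his, hi⟩
  · obtain ⟨i, hi, hωi⟩ := h hfin.toFinset
    exact hi (hfin.mem_toFinset.2 hωi)

variable [MeasurableSpace Ω] {μ : Measure Ω}

lemma sq_integral_le_integral_sq_mul_measureReal [IsFiniteMeasure μ] {f : Ω → ℝ} {U : Set Ω}
    (hf : Integrable f μ) (hf2 : Integrable (fun ω => f ω ^ 2) μ) (hU : ∀ ω ∉ U, f ω = 0) :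
    (∫ ω, f ω ∂μ) ^ 2 ≤ (∫ ω, f ω ^ 2 ∂μ) * μ.real U := by
  have hfU : ∫ ω in U, f ω ∂μ = ∫ ω, f ω ∂μ :=
    setIntegral_eq_integral_of_forall_compl_eq_zero hU
  have hf2U : ∫ ω in U, f ω ^ 2 ∂μ = ∫ ω, f ω ^ 2 ∂μ :=
    setIntegral_eq_integral_of_forall_compl_eq_zero fun ω hω => by simp [hU ω hω]
  have expand (t : ℝ) : ∫ ω in U, (f ω - t) ^ 2 ∂μ =
      μ.real U * (t * t) + -2 * (∫ ω, f ω ∂μ) * t + ∫ ω, f ω ^ 2 ∂μ := by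
    have hpoint : ∀ ω, (f ω - t) ^ 2 = f ω ^ 2 + -2 * t * f ω + t ^ 2 := fun ω => by ring
    simp_rw [hpoint]
    have hlin : Integrable (fun ω => -2 * t * f ω) (μ.restrict U) := (hf.const_mul _).restrict
    have hquad : Integrable (fun ω => f ω ^ 2 + -2 * t * f ω) (μ.restrict U) :=
      hf2.restrict.add hlin
    rw [integral_add hquad (integrable_const _), integral_add hf2.restrict hlin,
      integral_const_mul, hfU, hf2U, setIntegral_const, smul_eq_mul]
    ring
  have hdiscrim := discrim_le_zero fun t : ℝ =>
    expand t ▸ integral_nonneg (μ := μ.restrict U) fun ω => sq_nonneg (f ω - t)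
  rw [discrim] at hdiscrim
  linarith

lemma integrable_sum_indicator_one [IsFiniteMeasure μ] (hE : ∀ i, MeasurableSet (E i))
    (F : Finset ι) : Integrable (fun ω => ∑ i ∈ F, (E i).indicator (1 : Ω → ℝ) ω) μ :=
  integrable_finsetSum _ fun i _ => (integrable_const (1 : ℝ)).indicator (hE i)

lemma integral_sum_indicator_one [IsFiniteMeasure μ] (hE : ∀ i, MeasurableSet (E i))
    (F : Finset ι) :
    ∫ ω, ∑ i ∈ F, (E i).indicator (1 : Ω → ℝ) ω ∂μ = ∑ i ∈ F, μ.real (E i) := by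
  have hint : ∀ i ∈ F, Integrable ((E i).indicator (1 : Ω → ℝ)) μ :=
    fun i _ => (integrable_const (1 : ℝ)).indicator (hE i)
  rw [integral_finsetSum _ hint]
  exact sum_congr rfl fun i _ => integral_indicator_one (hE i)

/- The Chung–Erdős inequality: Cauchy–Schwarz for the counting function `∑ i ∈ F, 1_{E i}`. -/
lemma sq_sum_measureReal_le_mul_measureReal_biUnion [IsFiniteMeasure μ]
    (hE : ∀ i, MeasurableSet (E i)) (F : Finset ι) :
    (∑ i ∈ F, μ.real (E i)) ^ 2 ≤
      (∑ p ∈ F ×ˢ F, μ.real (E p.1 ∩ E p.2)) * μ.real (⋃ i ∈ F, E i) := by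
  have hE2 : ∀ p : ι × ι, MeasurableSet (E p.1 ∩ E p.2) := fun p => (hE p.1).inter (hE p.2)
  have hf2 := integrable_sum_indicator_one (μ := μ) hE2 (F ×ˢ F)
  rw [← integral_sum_indicator_one hE, ← integral_sum_indicator_one hE2]
  simp_rw [← sq_sum_indicator_one] at hf2 ⊢
  refine sq_integral_le_integral_sq_mul_measureReal (integrable_sum_indicator_one hE F) hf2
    fun ω hω => sum_eq_zero fun i hi => Set.indicator_of_notMem (fun hωi => hω ?_) _
  exact Set.mem_biUnion hi hωi

lemma measurableSet_biUnion_notMem [Countable ι] (hE : ∀ i, MeasurableSet (E i)) (s : Finset ι) :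
    MeasurableSet (⋃ i ∉ s, E i) :=
  MeasurableSet.iUnion fun i => MeasurableSet.iUnion fun _ => hE i

lemma measurableSet_setOf_infinite [Countable ι] (hE : ∀ i, MeasurableSet (E i)) :
    MeasurableSet {ω | {i | ω ∈ E i}.Infinite} := by
  rw [setOf_infinite_eq_iInter_biUnion_notMem]
  exact MeasurableSet.iInter fun s => measurableSet_biUnion_notMem hE s

lemma tendsto_measureReal_biUnion_notMem [Countable ι] [IsFiniteMeasure μ]
    (hE : ∀ i, MeasurableSet (E i)) :
    Filter.Tendsto (fun s : Finset ι => μ.real (⋃ i ∉ s, E i)) Filter.atTop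
      (nhds (μ.real {ω | {i | ω ∈ E i}.Infinite})) := by
  rw [setOf_infinite_eq_iInter_biUnion_notMem]
  refine (ENNReal.tendsto_toReal (measure_ne_top _ _)).comp
    (tendsto_measure_iInter_atTop (fun s => (measurableSet_biUnion_notMem hE s).nullMeasurableSet)
      (fun s t hst => ?_) ⟨∅, measure_ne_top _ _⟩)
  exact Set.biUnion_subset_biUnion_left fun i hi his => hi (hst his)

lemma sq_sum_sub_sum_le_mul_measureReal [IsFiniteMeasure μ] (hE : ∀ i, MeasurableSet (E i))
    (F s : Finset ι) (hs : ∑ i ∈ s, μ.real (E i) ≤ ∑ i ∈ F, μ.real (E i)) :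
    (∑ i ∈ F, μ.real (E i) - ∑ i ∈ s, μ.real (E i)) ^ 2 ≤
      (∑ p ∈ F ×ˢ F, μ.real (E p.1 ∩ E p.2)) * μ.real (⋃ i ∉ s, E i) := by
  classical
  have hdiff : ∑ i ∈ F, μ.real (E i) - ∑ i ∈ s, μ.real (E i) ≤ ∑ i ∈ F \ s, μ.real (E i) := by
    rw [sub_le_iff_le_add, ← sum_union sdiff_disjoint, sdiff_union_self_eq_union]
    exact sum_le_sum_of_subset_of_nonneg subset_union_left fun _ _ _ => measureReal_nonneg
  calc (∑ i ∈ F, μ.real (E i) - ∑ i ∈ s, μ.real (E i)) ^ 2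
      ≤ (∑ i ∈ F \ s, μ.real (E i)) ^ 2 := pow_le_pow_left₀ (sub_nonneg.2 hs) hdiff 2
    _ ≤ (∑ p ∈ (F \ s) ×ˢ (F \ s), μ.real (E p.1 ∩ E p.2)) * μ.real (⋃ i ∈ F \ s, E i) :=
        sq_sum_measureReal_le_mul_measureReal_biUnion hE _
    _ ≤ (∑ p ∈ F ×ˢ F, μ.real (E p.1 ∩ E p.2)) * μ.real (⋃ i ∉ s, E i) := by
        refine mul_le_mul ?_ (measureReal_mono ?_ (measure_ne_top _ _)) measureReal_nonneg
          (sum_nonneg fun _ _ => measureReal_nonneg)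
        · exact sum_le_sum_of_subset_of_nonneg (product_subset_product sdiff_subset sdiff_subset)
            fun _ _ _ => measureReal_nonneg
        · exact Set.iUnion₂_subset fun i hi =>
            Set.subset_biUnion_of_mem (u := E) (mem_sdiff.1 hi).2

/- Kochen–Stone: `sq_sum_sub_sum_le_mul_measureReal` bounds `⋃ i ∉ s, E i` from below uniformly in
`s`, because removing finitely many events does not affect the divergence of the sums. -/
theorem one_le_mul_measureReal_setOf_infinite [Countable ι] [IsFiniteMeasure μ]
    (hE : ∀ i, MeasurableSet (E i)) {F : κ → Finset ι} {l : Filter κ} [l.NeBot] {C : ℝ}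
    (hS : Filter.Tendsto (fun k => ∑ i ∈ F k, μ.real (E i)) l Filter.atTop)
    (hT : ∀ k, ∑ p ∈ F k ×ˢ F k, μ.real (E p.1 ∩ E p.2) ≤
      ∑ i ∈ F k, μ.real (E i) + C * (∑ i ∈ F k, μ.real (E i)) ^ 2) :
    1 ≤ C * μ.real {ω | {i | ω ∈ E i}.Infinite} := by
  refine ge_of_tendsto' ((tendsto_measureReal_biUnion_notMem hE).const_mul C) fun s => ?_
  set K := ∑ i ∈ s, μ.real (E i)
  set u := μ.real (⋃ i ∉ s, E i)
  have hbound : ∀ᶠ k in l, (1 - K * (∑ i ∈ F k, μ.real (E i))⁻¹) ^ 2 ≤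
      ((∑ i ∈ F k, μ.real (E i))⁻¹ + C) * u := by
    filter_upwards [hS.eventually_ge_atTop K, hS.eventually_gt_atTop 0] with k hK hpos
    have hle := (sq_sum_sub_sum_le_mul_measureReal hE (F k) s hK).trans
      (mul_le_mul_of_nonneg_right (hT k) measureReal_nonneg)
    set S := ∑ i ∈ F k, μ.real (E i)
    refine le_of_mul_le_mul_left ?_ (pow_pos hpos 2)
    calc S ^ 2 * (1 - K * S⁻¹) ^ 2 = (S - K) ^ 2 := by field_simp
      _ ≤ (S + C * S ^ 2) * u := hle
      _ = S ^ 2 * ((S⁻¹ + C) * u) := by field_simp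
  have hinv := tendsto_inv_atTop_zero.comp hS
  simpa using le_of_tendsto_of_tendsto (((hinv.const_mul K).const_sub 1).pow 2)
    ((hinv.add_const C).mul_const u) hbound

theorem ae_infinite_of_pairwise_indepSet [Countable ι] [IsProbabilityMeasure μ]
    (hE : ∀ i, MeasurableSet (E i))
    (hindep : Pairwise fun i j => ProbabilityTheory.IndepSet (E i) (E j) μ)
    (hsum : ¬ Summable fun i => μ.real (E i)) : ∀ᵐ ω ∂μ, {i | ω ∈ E i}.Infinite := by
  have hone := one_le_mul_measureReal_setOf_infinite (C := 1) hE (F := id)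
    (tendsto_sum_atTop_of_not_summable (fun _ => measureReal_nonneg) hsum)
    fun s => sum_product_self_le_add_mul_sq (m := fun i j => μ.real (E i ∩ E j)) zero_le_one
      (fun i _ => (congrArg μ.real (Set.inter_self (E i))).le) fun i _ j _ hij => by
        simp only [measureReal_def, (hindep hij).measure_inter_eq_mul, ENNReal.toReal_mul,
          one_mul, le_refl]
  rw [one_mul] at hone
  have hprob := le_antisymm measureReal_le_one hone
  refine (prob_compl_eq_zero_iff (measurableSet_setOf_infinite hE)).2 ?_
  rwa [measureReal_def, ENNReal.toReal_eq_one_iff] at hprob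

end KochenStone

section Summation

lemma tendsto_sum_Ioc_atTop_of_not_summable {f : ℕ → ℝ} (hf : ∀ n, 0 ≤ f n)
    (hsum : ¬ Summable f) :
    Filter.Tendsto (fun N => ∑ q ∈ Ioc 0 N, f q) Filter.atTop Filter.atTop := by
  have hshift := (not_summable_iff_tendsto_nat_atTop_of_nonneg fun n => hf (n + 1)).1
    (mt (summable_nat_add_iff 1).1 hsum)
  refine hshift.congr fun N => ?_
  rw [range_eq_Ico, sum_Ico_add' f 0 N 1]
  rfl

lemma not_summable_of_sum_Ioc_le {f g : ℕ → ℝ} {c : ℝ} (hf : ∀ n, 0 ≤ f n) (hg : ∀ n, 0 ≤ g n)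
    (hc : 0 < c) (hfg : ∀ N, c * ∑ q ∈ Ioc 0 N, f q ≤ ∑ q ∈ Ioc 0 N, g q)
    (hsum : ¬ Summable f) : ¬ Summable g := fun hg_sum => by
  obtain ⟨N, hN⟩ := (((tendsto_sum_Ioc_atTop_of_not_summable hf hsum).const_mul_atTop
    hc).eventually_gt_atTop (∑' q, g q)).exists
  exact (hN.trans_le (hfg N)).not_ge (hg_sum.sum_le_tsum _ fun q _ => hg q)

lemma sum_Ioc_mul_le_sum_Ioc_mul_of_antitone {c ψ : ℕ → ℝ} (hψ : Antitone ψ)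
    (hc : ∀ N, 0 ≤ ∑ q ∈ Ioc 0 N, c q) (N : ℕ) :
    (∑ q ∈ Ioc 0 N, c q) * ψ N ≤ ∑ q ∈ Ioc 0 N, c q * ψ q := by
  induction N with
  | zero => simp
  | succ N ih =>
    rw [sum_Ioc_succ_top N.zero_le, sum_Ioc_succ_top N.zero_le, add_mul]
    gcongr
    exact (mul_le_mul_of_nonneg_left (hψ N.le_succ) (hc N)).trans ih

lemma sum_Ioc_mul_le_sum_Ioc_mul_of_sum_Ioc_le {a b ψ : ℕ → ℝ} (hψ0 : ∀ h, 0 ≤ ψ h)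
    (hψ : Antitone ψ) (hab : ∀ N, ∑ q ∈ Ioc 0 N, a q ≤ ∑ q ∈ Ioc 0 N, b q) (N : ℕ) :
    ∑ q ∈ Ioc 0 N, a q * ψ q ≤ ∑ q ∈ Ioc 0 N, b q * ψ q := by
  have hnonneg (N : ℕ) : 0 ≤ ∑ q ∈ Ioc 0 N, (b q - a q) := by
    rw [sum_sub_distrib]
    exact sub_nonneg.2 (hab N)
  have habel := (mul_nonneg (hnonneg N) (hψ0 N)).trans
    (sum_Ioc_mul_le_sum_Ioc_mul_of_antitone hψ hnonneg N)
  simp_rw [sub_mul, sum_sub_distrib] at habel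
  exact sub_nonneg.1 habel

lemma sum_Ioc_id_eq_sum_Ioc_totient_mul_div (N : ℕ) :
    ∑ q ∈ Ioc 0 N, q = ∑ d ∈ Ioc 0 N, d.totient * (N / d) := by
  let φ : ArithmeticFunction ℕ := ⟨Nat.totient, Nat.totient_zero⟩
  have hφ (q : ℕ) : (φ * ArithmeticFunction.zeta) q = q :=
    ArithmeticFunction.mul_zeta_apply.trans q.sum_totient
  have hsum := ArithmeticFunction.sum_Ioc_mul_zeta_eq_sum φ N
  rw [ArithmeticFunction.natCoe_nat] at hsum
  simp only [hφ] at hsum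
  exact hsum

lemma half_mul_le_sum_Ioc_totient_div (N : ℕ) :
    1 / 2 * (N : ℝ) ≤ ∑ q ∈ Ioc 0 N, (q.totient : ℝ) / q := by
  rcases N.eq_zero_or_pos with rfl | hN
  · simp
  have hgauss : (N : ℝ) ^ 2 / 2 ≤ ((∑ q ∈ Ioc 0 N, q : ℕ) : ℝ) := by
    clear hN
    induction N with
    | zero => simp
    | succ N ih =>
      rw [sum_Ioc_succ_top N.zero_le]
      push_cast at ih ⊢
      linarith
  refine le_of_mul_le_mul_left ?_ (Nat.cast_pos.2 hN : (0 : ℝ) < N)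
  calc (N : ℝ) * (1 / 2 * N) = (N : ℝ) ^ 2 / 2 := by ring
    _ ≤ ((∑ d ∈ Ioc 0 N, d.totient * (N / d) : ℕ) : ℝ) :=
        sum_Ioc_id_eq_sum_Ioc_totient_mul_div N ▸ hgauss
    _ ≤ ∑ d ∈ Ioc 0 N, (d.totient : ℝ) * (N / d) := by
        push_cast
        gcongr
        exact Nat.cast_div_le
    _ = N * ∑ d ∈ Ioc 0 N, (d.totient : ℝ) / d := by
        rw [mul_sum]
        exact sum_congr rfl fun d _ => by ring

/- The indices `q ≤ c N / 2` carry at most `c N / 2` of the total mass, so at least as much lies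
where `q ^ m ≥ (c N / 2) ^ m`. -/
lemma pow_succ_le_sum_Ioc_mul_pow {t : ℕ → ℝ} {c : ℝ} (hc : 0 ≤ c) (ht0 : ∀ q, 0 ≤ t q)
    (ht1 : ∀ q, t q ≤ 1) {N : ℕ} (ht : c * N ≤ ∑ q ∈ Ioc 0 N, t q) (m : ℕ) :
    (c * N / 2) ^ (m + 1) ≤ ∑ q ∈ Ioc 0 N, t q * (q : ℝ) ^ m := by
  set r : ℝ := c * N / 2 with hr
  have hr0 : 0 ≤ r := by positivity
  have hsmall : ∑ q ∈ Ioc 0 ⌊r⌋₊, t q ≤ r := by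
    calc ∑ q ∈ Ioc 0 ⌊r⌋₊, t q ≤ ∑ _q ∈ Ioc 0 ⌊r⌋₊, (1 : ℝ) := sum_le_sum fun q _ => ht1 q
      _ = ⌊r⌋₊ := by rw [sum_const, Nat.card_Ioc, nsmul_one, Nat.sub_zero]
      _ ≤ r := Nat.floor_le hr0
  have hsplit : ∑ q ∈ Ioc 0 N, t q ≤ ∑ q ∈ Ioc 0 ⌊r⌋₊, t q + ∑ q ∈ Ioc ⌊r⌋₊ N, t q := by
    rw [← sum_union (Ioc_disjoint_Ioc_of_le le_rfl)]
    refine sum_le_sum_of_subset_of_nonneg (fun q hq => ?_) fun q _ _ => ht0 q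
    simp only [mem_union, mem_Ioc] at hq ⊢
    omega
  calc r ^ (m + 1) = r * r ^ m := pow_succ' r m
    _ ≤ (∑ q ∈ Ioc ⌊r⌋₊ N, t q) * r ^ m := by
        gcongr
        linarith
    _ ≤ ∑ q ∈ Ioc ⌊r⌋₊ N, t q * (q : ℝ) ^ m := by
        rw [sum_mul]
        refine sum_le_sum fun q hq => mul_le_mul_of_nonneg_left ?_ (ht0 q)
        exact pow_le_pow_left₀ hr0 (Nat.lt_of_floor_lt (mem_Ioc.1 hq).1).le m
    _ ≤ ∑ q ∈ Ioc 0 N, t q * (q : ℝ) ^ m :=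
        sum_le_sum_of_subset_of_nonneg (Ioc_subset_Ioc_left (Nat.zero_le _)) fun q _ _ =>
          mul_nonneg (ht0 q) (by positivity)

lemma totient_div_le_one (q : ℕ) : (q.totient : ℝ) / q ≤ 1 :=
  div_le_one_of_le₀ (mod_cast q.totient_le) q.cast_nonneg

lemma mul_sum_Ioc_pow_mul_le_sum_Ioc_totient_mul {ψ : ℕ → ℝ} (hψ0 : ∀ h, 0 ≤ ψ h)
    (hψ : Antitone ψ) (m N : ℕ) :
    (1 / 4 : ℝ) ^ (m + 1) * ∑ q ∈ Ioc 0 N, (q : ℝ) ^ m * ψ q ≤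
      ∑ q ∈ Ioc 0 N, (q.totient : ℝ) / q * q ^ m * ψ q := by
  simp_rw [mul_sum, ← mul_assoc]
  refine sum_Ioc_mul_le_sum_Ioc_mul_of_sum_Ioc_le hψ0 hψ (fun N => ?_) N
  calc ∑ q ∈ Ioc 0 N, (1 / 4 : ℝ) ^ (m + 1) * (q : ℝ) ^ m
      ≤ ∑ _q ∈ Ioc 0 N, (1 / 4 : ℝ) ^ (m + 1) * (N : ℝ) ^ m := by
        refine sum_le_sum fun q hq => ?_
        have := (mem_Ioc.1 hq).2
        gcongr
    _ = (1 / 2 * N / 2 : ℝ) ^ (m + 1) := by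
        rw [sum_const, Nat.card_Ioc, nsmul_eq_mul, Nat.sub_zero,
          show (1 / 2 * N / 2 : ℝ) = 1 / 4 * N by ring, mul_pow]
        ring
    _ ≤ ∑ q ∈ Ioc 0 N, (q.totient : ℝ) / q * (q : ℝ) ^ m :=
        pow_succ_le_sum_Ioc_mul_pow (by norm_num) (fun q => by positivity) totient_div_le_one
          (half_mul_le_sum_Ioc_totient_div N) m

lemma not_summable_totient_mul_pow_mul {ψ : ℕ → ℝ} (hψ0 : ∀ h, 0 ≤ ψ h) (hψ : Antitone ψ)
    {m : ℕ} (hdiv : ¬ Summable fun h : ℕ => (h : ℝ) ^ (m + 1) * ψ h) :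
    ¬ Summable fun h : ℕ => (h.totient : ℝ) * h ^ m * ψ h := by
  refine not_summable_of_sum_Ioc_le (fun h => mul_nonneg (by positivity) (hψ0 h))
    (fun h => mul_nonneg (by positivity) (hψ0 h)) (by positivity)
    (fun N => (mul_sum_Ioc_pow_mul_le_sum_Ioc_totient_mul hψ0 hψ (m + 1) N).trans_eq ?_) hdiv
  refine sum_congr rfl fun q hq => ?_
  have : (q : ℝ) ≠ 0 := Nat.cast_ne_zero.2 (mem_Ioc.1 hq).1.ne'
  rw [pow_succ']
  field_simp

lemma not_summable_pow_mul_min {ψ : ℕ → ℝ} (hψ : Antitone ψ) {c : ℝ} (hc : 0 < c) {m : ℕ}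
    (hdiv : ¬ Summable fun h : ℕ => (h : ℝ) ^ m * ψ h) :
    ¬ Summable fun h : ℕ => (h : ℝ) ^ m * min (ψ h) c := fun hmin => by
  have hlt : ∀ᶠ h : ℕ in Filter.atTop, (h : ℝ) ^ m * min (ψ h) c < c :=
    hmin.tendsto_atTop_zero.eventually_lt_const hc
  obtain ⟨k, hk, hk1⟩ := (hlt.and (Filter.eventually_ge_atTop 1)).exists
  have hk_pow : (1 : ℝ) ≤ (k : ℝ) ^ m := one_le_pow₀ (mod_cast hk1)
  have hψk : ψ k ≤ c := by
    by_contra! h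
    rw [min_eq_right h.le] at hk
    exact hk.not_ge (le_mul_of_one_le_left hc.le hk_pow)
  refine hdiv ((summable_nat_add_iff k).1 (((summable_nat_add_iff k).2 hmin).congr fun h => ?_))
  rw [min_eq_left ((hψ (Nat.le_add_left k h)).trans hψk)]

end Summation

section TorusForm

instance isProbabilityMeasure_volume_unitAddCircle :
    IsProbabilityMeasure (volume : Measure UnitAddCircle) :=
  ⟨UnitAddCircle.measure_univ⟩

variable {ι : Type*} [Fintype ι]

/-- The linear form `α ↦ x₁α₁ + ⋯ + xₙαₙ` modulo one, on the torus `ℝⁿ / ℤⁿ`; its norm at the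
class of `α ∈ ℝⁿ` is the distance of `x₁α₁ + ⋯ + xₙαₙ` to the nearest integer. -/
def torusForm (x : ι → ℤ) : UnitAddTorus ι →+ UnitAddCircle :=
  ∑ i, x i • Pi.evalAddMonoidHom (fun _ => UnitAddCircle) i

lemma torusForm_apply (x : ι → ℤ) (a : UnitAddTorus ι) : torusForm x a = ∑ i, x i • a i := by
  rw [torusForm, AddMonoidHom.finsetSum_apply]
  rfl

lemma continuous_torusForm (x : ι → ℤ) : Continuous (torusForm x) := by
  simp_rw [funext (torusForm_apply x)]
  fun_prop

lemma torusForm_coe (x : ι → ℤ) (α : ι → ℝ) :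
    torusForm x (fun i => (α i : UnitAddCircle)) =
      ((∑ i, (x i : ℝ) * α i : ℝ) : UnitAddCircle) := by
  rw [torusForm_apply, ← QuotientAddGroup.mk'_apply, map_sum]
  refine sum_congr rfl fun i _ => ?_
  rw [← zsmul_eq_mul]
  exact (AddCircle.coe_zsmul 1).symm

lemma norm_torusForm_coe {n : ℕ} (x : Fin n → ℤ) (α : Fin n → ℝ) :
    ‖torusForm x (fun i => (α i : UnitAddCircle))‖ = dnint (∑ i, (x i : ℝ) * α i) := by
  rw [torusForm_coe, UnitAddCircle.norm_eq, dnint]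

lemma measurePreserving_torusForm {x : ι → ℤ} {i : ι} (hi : x i ≠ 0) :
    MeasurePreserving (torusForm x) := by
  classical
  refine AddMonoidHom.measurePreserving (continuous_torusForm x) (fun s => ?_) (by simp)
  obtain ⟨s, rfl⟩ := QuotientAddGroup.mk_surjective s
  have hi' : (x i : ℝ) ≠ 0 := Int.cast_ne_zero.2 hi
  refine ⟨_, (torusForm_coe x (Pi.single i (s / x i))).trans (congrArg _ ?_)⟩
  simp [Pi.single_apply, mul_div_cancel₀ _ hi']

/- Surjectivity of `(torusForm x, torusForm y)` comes from solving the real linear system in the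
coordinates `i` and `j` by Cramer's rule. -/
lemma measurePreserving_torusForm_prodMk {x y : ι → ℤ} {i j : ι} (hij : x i * y j ≠ x j * y i) :
    MeasurePreserving (fun a => (torusForm x a, torusForm y a)) volume (volume.prod volume) := by
  classical
  refine AddMonoidHom.measurePreserving (f := (torusForm x).prod (torusForm y))
    ((continuous_torusForm x).prodMk (continuous_torusForm y)) (fun ⟨s, t⟩ => ?_) (by simp)
  obtain ⟨s, rfl⟩ := QuotientAddGroup.mk_surjective s
  obtain ⟨t, rfl⟩ := QuotientAddGroup.mk_surjective t
  set D : ℝ := x i * y j - x j * y i with hD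
  have hD0 : D ≠ 0 := sub_ne_zero.2 (mod_cast hij)
  set α : ι → ℝ := Pi.single i ((s * y j - t * x j) / D) + Pi.single j ((t * x i - s * y i) / D)
  have hα (z : ι → ℤ) : ∑ k, (z k : ℝ) * α k =
      z i * ((s * y j - t * x j) / D) + z j * ((t * x i - s * y i) / D) := by
    simp [α, mul_add, sum_add_distrib, Pi.single_apply]
  have hx : ∑ k, (x k : ℝ) * α k = s := by
    rw [hα]
    field_simp
    rw [hD]
    ring
  have hy : ∑ k, (y k : ℝ) * α k = t := by
    rw [hα]
    field_simp
    rw [hD]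
    ring
  refine ⟨fun k => (α k : UnitAddCircle), Prod.ext ?_ ?_⟩
  · exact (torusForm_coe x α).trans (congrArg _ hx)
  · exact (torusForm_coe y α).trans (congrArg _ hy)

lemma indepFun_torusForm {x y : ι → ℤ} {i j : ι} (hij : x i * y j ≠ x j * y i) :
    ProbabilityTheory.IndepFun (torusForm x) (torusForm y) := by
  have hpair := measurePreserving_torusForm_prodMk hij
  rw [ProbabilityTheory.indepFun_iff_map_prod_eq_prod_map_map
    (continuous_torusForm x).aemeasurable (continuous_torusForm y).aemeasurable, hpair.map_eq]
  have hx : MeasurePreserving (torusForm x) := measurePreserving_fst.comp hpair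
  have hy : MeasurePreserving (torusForm y) := measurePreserving_snd.comp hpair
  rw [hx.map_eq, hy.map_eq]

lemma measurableSet_norm_torusForm_le (x : ι → ℤ) (r : ℝ) :
    MeasurableSet {a : UnitAddTorus ι | ‖torusForm x a‖ ≤ r} :=
  (isClosed_le (continuous_torusForm x).norm continuous_const).measurableSet

lemma indepSet_norm_torusForm_le {x y : ι → ℤ} {i j : ι} (hij : x i * y j ≠ x j * y i) (r s : ℝ) :
    ProbabilityTheory.IndepSet {a : UnitAddTorus ι | ‖torusForm x a‖ ≤ r}
      {a : UnitAddTorus ι | ‖torusForm y a‖ ≤ s} :=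
  (ProbabilityTheory.indepFun_iff_indepSet_preimage (continuous_torusForm x).measurable
    (continuous_torusForm y).measurable).1 (indepFun_torusForm hij)
    {z | ‖z‖ ≤ r} {z | ‖z‖ ≤ s} (measurableSet_le measurable_norm measurable_const)
    (measurableSet_le measurable_norm measurable_const)

lemma measureReal_norm_torusForm_le {x : ι → ℤ} {i : ι} (hi : x i ≠ 0) {r : ℝ} (hr0 : 0 ≤ r)
    (hr : r ≤ 1 / 2) : volume.real {a : UnitAddTorus ι | ‖torusForm x a‖ ≤ r} = 2 * r := by
  have hpre : {a : UnitAddTorus ι | ‖torusForm x a‖ ≤ r} =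
      torusForm x ⁻¹' Metric.closedBall 0 r := by
    ext a
    rw [Set.mem_preimage, mem_closedBall_zero_iff]
    rfl
  rw [hpre, (measurePreserving_torusForm hi).measureReal_preimage
    Metric.isClosed_closedBall.measurableSet.nullMeasurableSet, measureReal_def,
    AddCircle.volume_closedBall, min_eq_right (by linarith), ENNReal.toReal_ofReal (by linarith)]

/- Cover `ℝⁿ` by the countably many unit boxes with integer corners; each one is a fundamental
domain for the torus. -/
lemma ae_coe_of_ae_unitAddTorus {P : UnitAddTorus ι → Prop} (hP : ∀ᵐ a, P a) :
    ∀ᵐ α : ι → ℝ, P fun i => (α i : UnitAddCircle) := by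
  have hcover : (⋃ k : ι → ℤ, Set.univ.pi fun i => Set.Ioc (k i : ℝ) (k i + 1)) = Set.univ := by
    refine Set.eq_univ_of_forall fun α => Set.mem_iUnion.2 ⟨fun i => ⌈α i⌉ - 1, fun i _ => ?_⟩
    push_cast
    exact ⟨by linarith [Int.ceil_lt_add_one (α i)], by linarith [Int.le_ceil (α i)]⟩
  rw [← Measure.restrict_univ (μ := (volume : Measure (ι → ℝ))), ← hcover,
    ae_restrict_iUnion_iff]
  intro k
  rw [volume_pi, Measure.restrict_pi_pi]
  exact (measurePreserving_pi _ _ fun i =>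
    AddCircle.measurePreserving_mk 1 (k i : ℝ)).quasiMeasurePreserving.ae hP

end TorusForm

section Cone

variable {n : ℕ}

lemma cone_mono {ℓ ℓ' : ℕ} (hℓ : ℓ ≤ ℓ') {x : Fin n → ℤ} (hx : cone ℓ x) : cone ℓ' x :=
  ((sup_mono (monotone_filter_right _ fun _ _ hi => hℓ.trans hi)).trans_lt hx).trans_le
    (sup_mono (monotone_filter_right _ fun _ _ hi => lt_of_lt_of_le hi hℓ))

lemma cone_one_iff {x : Fin (n + 1) → ℤ} :
    cone 1 x ↔ 0 < (x 0).natAbs ∧ ∀ i : Fin n, (x i.succ).natAbs < (x 0).natAbs := by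
  have hhead : univ.filter (fun i : Fin (n + 1) => (i : ℕ) < 1) = {0} := by
    ext i
    simp only [mem_filter, mem_univ, true_and, mem_singleton, Fin.ext_iff, Fin.val_zero,
      Nat.lt_one_iff]
  rw [cone, hhead, sup_singleton]
  refine ⟨fun h => ⟨pos_of_gt h, fun i => ?_⟩, fun ⟨h0, h⟩ =>
    (Finset.sup_lt_iff h0).2 fun i hi => ?_⟩
  · have hi : i.succ ∈ univ.filter fun i : Fin (n + 1) => 1 ≤ (i : ℕ) := by simp
    exact (le_sup (f := fun i => (x i).natAbs) hi).trans_lt h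
  · obtain ⟨j, rfl⟩ := Fin.exists_succ_eq.2 (Fin.pos_iff_ne_zero.1 (mem_filter.1 hi).2)
    exact h j

lemma Hgt_eq_of_cone_one {x : Fin (n + 1) → ℤ} (hx : cone 1 x) : Hgt x = (x 0).natAbs :=
  le_antisymm
    (Finset.sup_le fun i _ => Fin.cases le_rfl (fun i => ((cone_one_iff.1 hx).2 i).le) i)
    (le_sup (f := fun i => (x i).natAbs) (mem_univ 0))

end Cone

section CoprimeLayer

/-- The vectors `x` with `x₁ = h`, `x₂ ∈ [0, h)` coprime to `h`, and all further coordinates in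
`[0, h)`: an explicit family of primitive vectors of height `h` in the cone with `ℓ = 1`. -/
def coprimeLayer (m h : ℕ) : Finset (Fin (m + 2) → ℤ) :=
  Fintype.piFinset <| Fin.cons (α := fun _ => Finset ℤ) {(h : ℤ)} <|
    Fin.cons (α := fun _ => Finset ℤ) ({a ∈ range h | h.Coprime a}.map Nat.castEmbedding) fun _ =>
      (range h).map Nat.castEmbedding

variable {m h : ℕ} {x : Fin (m + 2) → ℤ}

lemma card_coprimeLayer (m h : ℕ) : #(coprimeLayer m h) = h.totient * h ^ m := by
  simp [coprimeLayer, Fin.prod_univ_succ, Nat.totient]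

lemma mem_coprimeLayer : x ∈ coprimeLayer m h ↔ x 0 = h ∧
    (∃ a < h, h.Coprime a ∧ (a : ℤ) = x 1) ∧ ∀ i : Fin m, ∃ a < h, (a : ℤ) = x i.succ.succ := by
  simp [coprimeLayer, Fin.forall_fin_succ, and_assoc]

lemma apply_zero_of_mem_coprimeLayer (hx : x ∈ coprimeLayer m h) : x 0 = h :=
  (mem_coprimeLayer.1 hx).1

lemma isCoprime_of_mem_coprimeLayer (hx : x ∈ coprimeLayer m h) : IsCoprime (x 0) (x 1) := by
  obtain ⟨h0, ⟨a, -, ha, h1⟩, -⟩ := mem_coprimeLayer.1 hx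
  rw [h0, ← h1]
  exact Nat.isCoprime_iff_coprime.2 ha

lemma apply_zero_pos_of_mem_coprimeLayer (hx : x ∈ coprimeLayer m h) : 0 < x 0 := by
  obtain ⟨h0, ⟨a, ha, -⟩, -⟩ := mem_coprimeLayer.1 hx
  rw [h0]
  exact Nat.cast_pos.2 (pos_of_gt ha)

lemma cone_one_of_mem_coprimeLayer (hx : x ∈ coprimeLayer m h) : cone 1 x := by
  obtain ⟨h0, ⟨a, ha, -, h1⟩, htail⟩ := mem_coprimeLayer.1 hx
  refine cone_one_iff.2 ⟨Int.natAbs_pos.2 (apply_zero_pos_of_mem_coprimeLayer hx).ne',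
    Fin.cases ?_ fun i => ?_⟩
  · rw [h0, Fin.succ_zero_eq_one, ← h1]
    exact ha
  · obtain ⟨b, hb, hxb⟩ := htail i
    rw [h0, ← hxb]
    exact hb

lemma Hgt_of_mem_coprimeLayer (hx : x ∈ coprimeLayer m h) : Hgt x = h := by
  rw [Hgt_eq_of_cone_one (cone_one_of_mem_coprimeLayer hx), apply_zero_of_mem_coprimeLayer hx,
    Int.natAbs_natCast]

lemma eq_of_isCoprime_of_proportional {ι : Type*} {x y : ι → ℤ} {i j : ι} (hxi : 0 < x i)
    (hyi : 0 < y i) (hx : IsCoprime (x i) (x j)) (hy : IsCoprime (y i) (y j))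
    (hxy : ∀ k, x i * y k = x k * y i) : x = y := by
  have hdvd : x i ∣ y i := hx.dvd_of_dvd_mul_left ⟨y j, (hxy j).symm⟩
  have hdvd' : y i ∣ x i := hy.dvd_of_dvd_mul_left ⟨x j, by rw [mul_comm, hxy, mul_comm]⟩
  have heq : x i = y i := Int.dvd_antisymm hxi.le hyi.le hdvd hdvd'
  funext k
  refine mul_right_cancel₀ hyi.ne' ?_
  rw [← hxy k, heq, mul_comm]

lemma not_summable_measureReal_coprimeLayer {ψ : ℕ → ℝ} (hψ0 : ∀ h, 0 ≤ ψ h)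
    (hψ : Antitone ψ) (hhalf : ∀ h, ψ h ≤ 1 / 2)
    (hdiv : ¬ Summable fun h : ℕ => (h : ℝ) ^ (m + 1) * ψ h) :
    ¬ Summable fun p : Σ h, coprimeLayer m h =>
      volume.real {a : UnitAddTorus (Fin (m + 2)) | ‖torusForm p.2.1 a‖ ≤ ψ p.1} := fun hsum => by
  have hvol (p : Σ h, coprimeLayer m h) :
      volume.real {a : UnitAddTorus (Fin (m + 2)) | ‖torusForm p.2.1 a‖ ≤ ψ p.1} = 2 * ψ p.1 :=
    measureReal_norm_torusForm_le (apply_zero_pos_of_mem_coprimeLayer p.2.2).ne' (hψ0 _) (hhalf _)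
  simp_rw [hvol] at hsum
  refine not_summable_totient_mul_pow_mul hψ0 hψ hdiv ((hsum.sigma.mul_left (1 / 2)).congr ?_)
  intro h
  dsimp only
  rw [tsum_fintype, sum_const, card_univ, Fintype.card_coe, card_coprimeLayer, nsmul_eq_mul]
  push_cast
  ring

theorem ae_infinite_torusForm_of_two_le_dim {ψ : ℕ → ℝ} (hψ0 : ∀ h, 0 ≤ ψ h)
    (hψ : Antitone ψ) (hhalf : ∀ h, ψ h ≤ 1 / 2)
    (hdiv : ¬ Summable fun h : ℕ => (h : ℝ) ^ (m + 1) * ψ h) :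
    ∀ᵐ a : UnitAddTorus (Fin (m + 2)),
      {x : Fin (m + 2) → ℤ | cone 1 x ∧ ‖torusForm x a‖ ≤ ψ (Hgt x)}.Infinite := by
  have hinj : Function.Injective fun p : Σ h, coprimeLayer m h => p.2.1 := by
    rintro ⟨h, x, hx⟩ ⟨k, y, hy⟩ (rfl : x = y)
    obtain rfl : h = k := (Hgt_of_mem_coprimeLayer hx).symm.trans (Hgt_of_mem_coprimeLayer hy)
    rfl
  have hindep : Pairwise fun p q : Σ h, coprimeLayer m h => ProbabilityTheory.IndepSet
      {a : UnitAddTorus (Fin (m + 2)) | ‖torusForm p.2.1 a‖ ≤ ψ p.1}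
      {a : UnitAddTorus (Fin (m + 2)) | ‖torusForm q.2.1 a‖ ≤ ψ q.1} := fun p q hpq => by
    obtain ⟨j, hj⟩ : ∃ j, p.2.1 0 * q.2.1 j ≠ p.2.1 j * q.2.1 0 := by
      by_contra! hprop
      exact hpq <| hinj <| eq_of_isCoprime_of_proportional
        (apply_zero_pos_of_mem_coprimeLayer p.2.2) (apply_zero_pos_of_mem_coprimeLayer q.2.2)
        (isCoprime_of_mem_coprimeLayer p.2.2) (isCoprime_of_mem_coprimeLayer q.2.2) hprop
    exact indepSet_norm_torusForm_le hj _ _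
  filter_upwards [ae_infinite_of_pairwise_indepSet (fun _ => measurableSet_norm_torusForm_le _ _)
    hindep (not_summable_measureReal_coprimeLayer hψ0 hψ hhalf hdiv)] with a ha
  refine (ha.image hinj.injOn).mono ?_
  rintro _ ⟨⟨h, x, hx⟩, hxa, rfl⟩
  refine ⟨cone_one_of_mem_coprimeLayer hx, ?_⟩
  rw [Hgt_of_mem_coprimeLayer hx]
  exact hxa

end CoprimeLayer

section CircleTorsion

variable {q r : ℕ}

lemma inv_le_norm_of_nsmul_eq_zero (hq : 0 < q) {w : UnitAddCircle} (hw : q • w = 0)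
    (hw0 : w ≠ 0) : (q : ℝ)⁻¹ ≤ ‖w‖ := by
  have hfin : IsOfFinAddOrder w := isOfFinAddOrder_iff_nsmul_eq_zero.2 ⟨q, hq, hw⟩
  have horder : (addOrderOf w : ℝ) ≤ q := mod_cast addOrderOf_le_of_nsmul_eq_zero hq hw
  refine inv_le_of_inv_le₀ (norm_pos_iff.2 hw0) ((inv_le_iff_one_le_mul₀ (norm_pos_iff.2 hw0)).2 ?_)
  calc (1 : ℝ) ≤ addOrderOf w • ‖w‖ :=
        AddCircle.le_add_order_smul_norm_of_isOfFinAddOrder hfin hw0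
    _ ≤ q * ‖w‖ := by
        rw [nsmul_eq_mul]
        gcongr

lemma measureReal_ball_unitAddCircle (u : UnitAddCircle) {δ : ℝ} (hδ : 0 ≤ δ) :
    volume.real (Metric.ball u δ) = min 1 (2 * δ) := by
  rw [← measureReal_congr AddCircle.closedBall_ae_eq_ball, measureReal_def,
    AddCircle.volume_closedBall, ENNReal.toReal_ofReal (by positivity)]

lemma measureReal_biUnion_ball_of_nsmul_eq_zero (hq : 0 < q) {W : Finset UnitAddCircle}
    (hW : ∀ w ∈ W, q • w = 0) {δ : ℝ} (hδ0 : 0 ≤ δ) (hδ : 2 * δ ≤ (q : ℝ)⁻¹) :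
    volume.real (⋃ w ∈ W, Metric.ball w δ) = #W * (2 * δ) := by
  have hdisj : (W : Set UnitAddCircle).PairwiseDisjoint fun w => Metric.ball w δ :=
    fun u hu v hv huv => Metric.ball_disjoint_ball <| by
      have hsub : q • (u - v) = 0 := by rw [nsmul_sub, hW u hu, hW v hv, sub_zero]
      rw [dist_eq_norm, ← two_mul]
      exact hδ.trans (inv_le_norm_of_nsmul_eq_zero hq hsub (sub_ne_zero.2 huv))
  have hδ1 : 2 * δ ≤ 1 := hδ.trans (Nat.cast_inv_le_one q)
  rw [measureReal_biUnion_finset hdisj fun _ _ => Metric.isOpen_ball.measurableSet]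
  simp_rw [measureReal_ball_unitAddCircle _ hδ0, min_eq_right hδ1, sum_const, nsmul_eq_mul]

lemma card_le_of_nsmul_eq_zero (hq : 0 < q) {W : Finset UnitAddCircle}
    (hW : ∀ w ∈ W, q • w = 0) : #W ≤ q := by
  have hvol := measureReal_biUnion_ball_of_nsmul_eq_zero hq hW (δ := (q : ℝ)⁻¹ / 2)
    (by positivity) (by linarith)
  rw [mul_div_cancel₀ _ two_ne_zero, ← div_eq_mul_inv] at hvol
  exact_mod_cast (div_le_one₀ (by positivity)).1 (hvol.symm.trans_le measureReal_le_one)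

/- Disjoint balls of radius `1 / (2q)` around `0` and the points of `W` fit into the ball of radius
`ε + 1 / (2q)` around `0`. The ball at `0` absorbs the error term. -/
lemma card_le_of_nsmul_eq_zero_of_norm_lt (hq : 0 < q) {ε : ℝ} (hε : 0 ≤ ε)
    {W : Finset UnitAddCircle} (hW : ∀ w ∈ W, q • w = 0) (hW0 : 0 ∉ W)
    (hWε : ∀ w ∈ W, ‖w‖ < ε) : (#W : ℝ) ≤ 2 * ε * q := by
  set δ : ℝ := (q : ℝ)⁻¹ / 2 with hδ
  have hδ0 : 0 ≤ δ := by positivity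
  have hvol := measureReal_biUnion_ball_of_nsmul_eq_zero hq (W := insert 0 W)
    (forall_mem_insert _ _ _ |>.2 ⟨nsmul_zero q, hW⟩) hδ0 (by linarith)
  have hsub : ⋃ w ∈ insert 0 W, Metric.ball w δ ⊆ Metric.ball (0 : UnitAddCircle) (ε + δ) :=
    Set.iUnion₂_subset fun w hw => Metric.ball_subset_ball' <| by
      rcases mem_insert.1 hw with rfl | hw
      · rw [dist_self]
        linarith
      · rw [dist_zero_right]
        linarith [hWε w hw]
  have hle : ((#W : ℝ) + 1) * (q : ℝ)⁻¹ ≤ 2 * ε + (q : ℝ)⁻¹ :=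
    calc ((#W : ℝ) + 1) * (q : ℝ)⁻¹ = volume.real (⋃ w ∈ insert 0 W, Metric.ball w δ) := by
          rw [hvol, card_insert_of_notMem hW0, hδ]
          push_cast
          ring
      _ ≤ volume.real (Metric.ball (0 : UnitAddCircle) (ε + δ)) := measureReal_mono hsub
      _ ≤ 2 * (ε + δ) := by
          rw [measureReal_ball_unitAddCircle _ (by positivity)]
          exact min_le_right _ _
      _ = 2 * ε + (q : ℝ)⁻¹ := by
          rw [hδ]
          ring
  rw [← div_le_iff₀ (by positivity), div_eq_mul_inv]
  linarith

lemma card_filter_sub_eq_le_gcd (hq : 0 < q) {Q : Finset (UnitAddCircle × UnitAddCircle)}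
    (hQ : ∀ p ∈ Q, q • p.1 = 0 ∧ r • p.2 = 0) (a : UnitAddCircle) :
    #{p ∈ Q | p.1 - p.2 = a} ≤ q.gcd r := by
  rcases ({p ∈ Q | p.1 - p.2 = a} : Finset _).eq_empty_or_nonempty with hempty | ⟨p₀, hp₀⟩
  · simp only [hempty, card_empty, zero_le]
  obtain ⟨hp₀Q, hp₀a⟩ := mem_filter.1 hp₀
  have hinj : Set.InjOn (fun p : UnitAddCircle × UnitAddCircle => p.1 - p₀.1)
      ({p ∈ Q | p.1 - p.2 = a} : Finset _) := fun p hp p' hp' h => by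
    have hfst : p.1 = p'.1 := sub_left_injective h
    have hsub := (mem_filter.1 hp).2.trans (mem_filter.1 hp').2.symm
    rw [hfst] at hsub
    exact Prod.ext hfst (sub_right_injective hsub)
  rw [← card_image_of_injOn hinj]
  refine card_le_of_nsmul_eq_zero (Nat.gcd_pos_of_pos_left r hq)
    (forall_mem_image.2 fun p hp => ?_)
  obtain ⟨hpQ, hpa⟩ := mem_filter.1 hp
  have hswap : p.1 - p₀.1 = p.2 - p₀.2 := sub_eq_sub_iff_sub_eq_sub.1 (hpa.trans hp₀a.symm)
  refine addOrderOf_dvd_iff_nsmul_eq_zero.1 (Nat.dvd_gcd ?_ ?_) <;>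
    rw [addOrderOf_dvd_iff_nsmul_eq_zero]
  · rw [nsmul_sub, (hQ p hpQ).1, (hQ p₀ hp₀Q).1, sub_zero]
  · rw [hswap, nsmul_sub, (hQ p hpQ).2, (hQ p₀ hp₀Q).2, sub_zero]

/- The differences `p.1 - p.2` are nonzero `lcm(q, r)`-torsion points of norm less than `ε`, and
each is attained by at most `gcd(q, r)` pairs. -/
lemma card_pairs_le_of_nsmul_eq_zero (hq : 0 < q) (hr : 0 < r) {ε : ℝ} (hε : 0 ≤ ε)
    {Q : Finset (UnitAddCircle × UnitAddCircle)}
    (hQ : ∀ p ∈ Q, q • p.1 = 0 ∧ r • p.2 = 0) (hne : ∀ p ∈ Q, p.1 ≠ p.2)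
    (hdist : ∀ p ∈ Q, dist p.1 p.2 < ε) : (#Q : ℝ) ≤ 2 * ε * (q * r) := by
  set D : Finset UnitAddCircle := Q.image fun p => p.1 - p.2
  have hfiber : #Q ≤ q.gcd r * #D :=
    card_le_mul_card_image Q _ fun a _ => card_filter_sub_eq_le_gcd hq hQ a
  have himage : (#D : ℝ) ≤ 2 * ε * q.lcm r := by
    refine card_le_of_nsmul_eq_zero_of_norm_lt (Nat.lcm_pos hq hr) hε
      (forall_mem_image.2 fun p hp => ?_) (fun h0 => ?_)
      (forall_mem_image.2 fun p hp => (dist_eq_norm p.1 p.2).symm.trans_lt (hdist p hp))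
    · obtain ⟨hp1, hp2⟩ := hQ p hp
      rw [← addOrderOf_dvd_iff_nsmul_eq_zero] at hp1 hp2
      rw [nsmul_sub, addOrderOf_dvd_iff_nsmul_eq_zero.1 (hp1.trans (Nat.dvd_lcm_left q r)),
        addOrderOf_dvd_iff_nsmul_eq_zero.1 (hp2.trans (Nat.dvd_lcm_right q r)), sub_zero]
    · obtain ⟨p, hp, hp0⟩ := mem_image.1 h0
      exact hne p hp (sub_eq_zero.1 hp0)
  calc (#Q : ℝ) ≤ q.gcd r * #D := mod_cast hfiber
    _ ≤ q.gcd r * (2 * ε * q.lcm r) := by gcongr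
    _ = 2 * ε * (q.gcd r * q.lcm r : ℕ) := by
        push_cast
        ring
    _ = 2 * ε * (q * r) := by rw [Nat.gcd_mul_lcm, Nat.cast_mul]

end CircleTorsion

section ApproxAddOrder

variable {q r : ℕ}

/-- The points of the circle of exact order `q`, i.e. the reduced fractions with denominator `q`. -/
noncomputable def pointsOfOrder (hq : 0 < q) : Finset UnitAddCircle :=
  (AddCircle.finite_setOfPred_addOrderOf_eq (1 : ℝ) hq).toFinset

lemma mem_pointsOfOrder (hq : 0 < q) {u : UnitAddCircle} :
    u ∈ pointsOfOrder hq ↔ addOrderOf u = q :=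
  Set.Finite.mem_toFinset _

lemma nsmul_eq_zero_of_mem_pointsOfOrder (hq : 0 < q) {u : UnitAddCircle}
    (hu : u ∈ pointsOfOrder hq) : q • u = 0 := by
  rw [← (mem_pointsOfOrder hq).1 hu, addOrderOf_nsmul_eq_zero]

lemma card_pointsOfOrder (hq : 0 < q) : #(pointsOfOrder hq) = q.totient :=
  (Nat.subtype_card _ fun _ => mem_pointsOfOrder hq).symm.trans
    (AddCircle.card_addOrderOf_eq_totient 1)

lemma approxAddOrderOf_eq_biUnion (hq : 0 < q) (δ : ℝ) :
    approxAddOrderOf UnitAddCircle q δ = ⋃ u ∈ pointsOfOrder hq, Metric.ball u δ := by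
  ext a
  simp only [mem_approx_add_orderOf_iff, Set.mem_iUnion, mem_pointsOfOrder, exists_prop]

lemma measureReal_approxAddOrderOf (hq : 0 < q) {δ : ℝ} (hδ0 : 0 ≤ δ) (hδ : 2 * δ ≤ (q : ℝ)⁻¹) :
    volume.real (approxAddOrderOf UnitAddCircle q δ) = q.totient * (2 * δ) := by
  rw [approxAddOrderOf_eq_biUnion hq, measureReal_biUnion_ball_of_nsmul_eq_zero hq
    (fun _ => nsmul_eq_zero_of_mem_pointsOfOrder hq) hδ0 hδ, card_pointsOfOrder]

lemma measureReal_approxAddOrderOf_div (hq : 0 < q) {s : ℝ} (hs0 : 0 ≤ s) (hs : s ≤ 1 / 2) :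
    volume.real (approxAddOrderOf UnitAddCircle q (s / q)) = 2 * ((q.totient : ℝ) / q * s) := by
  rw [measureReal_approxAddOrderOf hq (by positivity)]
  · ring
  · rw [mul_div_assoc', div_eq_mul_inv]
    exact mul_le_of_le_one_left (by positivity) (by linarith)

lemma measureReal_ball_inter_ball_le (u v : UnitAddCircle) {δ η : ℝ} (hδ : 0 ≤ δ) (hη : 0 ≤ η) :
    volume.real (Metric.ball u δ ∩ Metric.ball v η) ≤ 2 * min δ η := by
  rw [mul_min_of_nonneg _ _ zero_le_two]
  refine le_min ((measureReal_mono Set.inter_subset_left).trans ?_)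
    ((measureReal_mono Set.inter_subset_right).trans ?_)
  · exact (measureReal_ball_unitAddCircle u hδ).trans_le (min_le_right _ _)
  · exact (measureReal_ball_unitAddCircle v hη).trans_le (min_le_right _ _)

lemma approxAddOrderOf_inter_subset_biUnion (hq : 0 < q) (hr : 0 < r) (δ η : ℝ) :
    approxAddOrderOf UnitAddCircle q δ ∩ approxAddOrderOf UnitAddCircle r η ⊆
      ⋃ p ∈ {p ∈ pointsOfOrder hq ×ˢ pointsOfOrder hr | dist p.1 p.2 < δ + η},
        Metric.ball p.1 δ ∩ Metric.ball p.2 η := by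
  rw [approxAddOrderOf_eq_biUnion hq, approxAddOrderOf_eq_biUnion hr]
  rintro a ⟨hqa, hra⟩
  obtain ⟨u, hu, hau⟩ := Set.mem_iUnion₂.1 hqa
  obtain ⟨v, hv, hav⟩ := Set.mem_iUnion₂.1 hra
  have huv : dist u v < δ + η := (dist_triangle_left u v a).trans_lt (add_lt_add hau hav)
  exact Set.mem_iUnion₂.2
    ⟨(u, v), mem_filter.2 ⟨mem_product.2 ⟨hu, hv⟩, huv⟩, hau, hav⟩

lemma card_pairs_pointsOfOrder_le (hq : 0 < q) (hr : 0 < r) (hqr : q ≠ r) {ε : ℝ} (hε : 0 ≤ ε) :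
    (#{p ∈ pointsOfOrder hq ×ˢ pointsOfOrder hr | dist p.1 p.2 < ε} : ℝ) ≤ 2 * ε * (q * r) := by
  refine card_pairs_le_of_nsmul_eq_zero hq hr hε (fun p hp => ?_) (fun p hp heq => hqr ?_)
    fun p hp => (mem_filter.1 hp).2
  all_goals obtain ⟨hp1, hp2⟩ := mem_product.1 (mem_filter.1 hp).1
  · exact ⟨nsmul_eq_zero_of_mem_pointsOfOrder hq hp1, nsmul_eq_zero_of_mem_pointsOfOrder hr hp2⟩
  · rw [← (mem_pointsOfOrder hq).1 hp1, heq, (mem_pointsOfOrder hr).1 hp2]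

lemma measureReal_approxAddOrderOf_inter_le (hq : 0 < q) (hr : 0 < r) (hqr : q ≠ r) {δ η : ℝ}
    (hδ : 0 ≤ δ) (hη : 0 ≤ η) :
    volume.real (approxAddOrderOf UnitAddCircle q δ ∩ approxAddOrderOf UnitAddCircle r η) ≤
      8 * (q * δ * (r * η)) := by
  set Q := {p ∈ pointsOfOrder hq ×ˢ pointsOfOrder hr | dist p.1 p.2 < δ + η}
  have hmin : (δ + η) * min δ η ≤ 2 * (δ * η) :=
    calc (δ + η) * min δ η = δ * min δ η + η * min δ η := add_mul _ _ _
      _ ≤ δ * η + η * δ := by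
          gcongr
          · exact min_le_right _ _
          · exact min_le_left _ _
      _ = 2 * (δ * η) := by ring
  calc volume.real (approxAddOrderOf UnitAddCircle q δ ∩ approxAddOrderOf UnitAddCircle r η)
      ≤ volume.real (⋃ p ∈ Q, Metric.ball p.1 δ ∩ Metric.ball p.2 η) :=
        measureReal_mono (approxAddOrderOf_inter_subset_biUnion hq hr δ η) (measure_ne_top _ _)
    _ ≤ ∑ p ∈ Q, volume.real (Metric.ball p.1 δ ∩ Metric.ball p.2 η) :=
        measureReal_biUnion_finset_le _ _
    _ ≤ #Q • (2 * min δ η) :=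
        sum_le_card_nsmul _ _ _ fun p _ => measureReal_ball_inter_ball_le _ _ hδ hη
    _ ≤ 2 * (δ + η) * (q * r) * (2 * min δ η) := by
        rw [nsmul_eq_mul]
        gcongr
        exact card_pairs_pointsOfOrder_le hq hr hqr (by positivity)
    _ = 4 * (q * r) * ((δ + η) * min δ η) := by ring
    _ ≤ 4 * (q * r) * (2 * (δ * η)) := by gcongr
    _ = 8 * (q * δ * (r * η)) := by ring

lemma norm_nsmul_le_of_mem_approxAddOrderOf {A : Type*} [SeminormedAddCommGroup A] {δ : ℝ} {a : A}
    (ha : a ∈ approxAddOrderOf A q δ) : ‖q • a‖ ≤ q * δ := by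
  obtain ⟨b, rfl, hab⟩ := mem_approx_add_orderOf_iff.1 ha
  rw [mem_ball_iff_norm] at hab
  calc ‖addOrderOf b • a‖ = ‖addOrderOf b • (a - b)‖ := by
        rw [nsmul_sub, addOrderOf_nsmul_eq_zero, sub_zero]
    _ ≤ addOrderOf b * ‖a - b‖ := norm_nsmul_le
    _ ≤ addOrderOf b * δ := by gcongr

end ApproxAddOrder

section Khintchine

variable {ψ : ℕ → ℝ}

lemma one_le_mul_measureReal_setOf_infinite_approxAddOrderOf (hψ0 : ∀ h, 0 ≤ ψ h)
    (hψ : Antitone ψ) (hhalf : ∀ h, ψ h ≤ 1 / 2) (hdiv : ¬ Summable ψ) :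
    1 ≤ 32 * volume.real
      {a : UnitAddCircle | {q | a ∈ approxAddOrderOf UnitAddCircle q (ψ q / q)}.Infinite} := by
  set E : ℕ → Set UnitAddCircle := fun q => approxAddOrderOf UnitAddCircle q (ψ q / q)
  have hδ0 (q : ℕ) : 0 ≤ ψ q / q := div_nonneg (hψ0 q) q.cast_nonneg
  have hmass (N : ℕ) : 1 / 2 * ∑ q ∈ Ioc 0 N, ψ q ≤ ∑ q ∈ Ioc 0 N, volume.real (E q) := by
    rw [sum_congr rfl fun q hq =>
      measureReal_approxAddOrderOf_div (mem_Ioc.1 hq).1 (hψ0 q) (hhalf q), ← mul_sum]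
    have htotient := mul_sum_Ioc_pow_mul_le_sum_Ioc_totient_mul hψ0 hψ 0 N
    simp only [pow_zero, one_mul, mul_one, zero_add, pow_one] at htotient
    linarith
  have hoverlap (q : ℕ) (hq : 0 < q) (r : ℕ) (hr : 0 < r) (hqr : q ≠ r) :
      volume.real (E q ∩ E r) ≤ 8 * (ψ q * ψ r) := by
    refine (measureReal_approxAddOrderOf_inter_le hq hr hqr (hδ0 q) (hδ0 r)).trans_eq ?_
    rw [mul_div_cancel₀ _ (by positivity), mul_div_cancel₀ _ (by positivity)]
  refine one_le_mul_measureReal_setOf_infinite (fun q => Metric.isOpen_thickening.measurableSet)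
    (Filter.tendsto_atTop_mono hmass
      ((tendsto_sum_Ioc_atTop_of_not_summable hψ0 hdiv).const_mul_atTop one_half_pos)) fun N => ?_
  calc ∑ p ∈ Ioc 0 N ×ˢ Ioc 0 N, volume.real (E p.1 ∩ E p.2)
      ≤ ∑ q ∈ Ioc 0 N, volume.real (E q) + 8 * (∑ q ∈ Ioc 0 N, ψ q) ^ 2 :=
        sum_product_self_le_add_mul_sq (m := fun q r => volume.real (E q ∩ E r)) (by norm_num)
          (fun q _ => measureReal_mono Set.inter_subset_left) fun q hq r hr =>
            hoverlap q (mem_Ioc.1 hq).1 r (mem_Ioc.1 hr).1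
    _ ≤ ∑ q ∈ Ioc 0 N, volume.real (E q) +
          8 * (2 * ∑ q ∈ Ioc 0 N, volume.real (E q)) ^ 2 := by
        have := hmass N
        have := sum_nonneg fun q (_ : q ∈ Ioc 0 N) => hψ0 q
        gcongr
        linarith
    _ = ∑ q ∈ Ioc 0 N, volume.real (E q) + 32 * (∑ q ∈ Ioc 0 N, volume.real (E q)) ^ 2 := by
        ring

lemma mem_addWellApproximable_iff_infinite {A : Type*} [SeminormedAddCommGroup A] {δ : ℕ → ℝ}
    {a : A} : a ∈ addWellApproximable A δ ↔
      {q | 0 < q ∧ a ∈ approxAddOrderOf A q (δ q)}.Infinite := by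
  rw [mem_add_wellApproximable_iff, ← Nat.cofinite_eq_atTop, Filter.cofinite.blimsup_set_eq]
  rfl

lemma ae_mem_addWellApproximable (hψ0 : ∀ h, 0 ≤ ψ h) (hψ : Antitone ψ)
    (hhalf : ∀ h, ψ h ≤ 1 / 2) (hdiv : ¬ Summable ψ) :
    ∀ᵐ a : UnitAddCircle, a ∈ addWellApproximable UnitAddCircle fun q => ψ q / q := by
  have hlim : Filter.Tendsto (fun q : ℕ => ψ q / q) Filter.atTop (nhds 0) :=
    squeeze_zero (fun q => div_nonneg (hψ0 q) q.cast_nonneg)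
      (fun q => div_le_div_of_nonneg_right (hhalf q) q.cast_nonneg)
      (tendsto_const_div_atTop_nhds_zero_nat _)
  refine (AddCircle.addWellApproximable_ae_empty_or_univ (T := 1) _ hlim).resolve_left
    fun hnull => ?_
  have hzero : volume.real
      {a : UnitAddCircle | {q | a ∈ approxAddOrderOf UnitAddCircle q (ψ q / q)}.Infinite} = 0 := by
    refine (measureReal_eq_zero_iff (measure_ne_top _ _)).2
      (measure_mono_null (fun a ha => ?_) (ae_iff.1 hnull))
    refine not_not.2 (mem_addWellApproximable_iff_infinite.2 ?_)
    exact (ha.sdiff (Set.finite_singleton 0)).mono fun q hq => ⟨Nat.pos_of_ne_zero hq.2, hq.1⟩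
  have hpos := one_le_mul_measureReal_setOf_infinite_approxAddOrderOf hψ0 hψ hhalf hdiv
  rw [hzero] at hpos
  norm_num at hpos

theorem ae_infinite_norm_nsmul_le (hψ0 : ∀ h, 0 ≤ ψ h) (hψ : Antitone ψ)
    (hhalf : ∀ h, ψ h ≤ 1 / 2) (hdiv : ¬ Summable ψ) :
    ∀ᵐ a : UnitAddCircle, {q : ℕ | 0 < q ∧ ‖q • a‖ ≤ ψ q}.Infinite := by
  filter_upwards [ae_mem_addWellApproximable hψ0 hψ hhalf hdiv] with a ha
  refine (mem_addWellApproximable_iff_infinite.1 ha).mono ?_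
  rintro q ⟨hq, hqa⟩
  refine ⟨hq, ?_⟩
  refine (norm_nsmul_le_of_mem_approxAddOrderOf hqa).trans_eq ?_
  rw [mul_div_cancel₀ _ (by positivity)]

end Khintchine

section KhintchineGroshev

lemma ae_infinite_torusForm_fin_one {ψ : ℕ → ℝ} (hψ0 : ∀ h, 0 ≤ ψ h) (hψ : Antitone ψ)
    (hhalf : ∀ h, ψ h ≤ 1 / 2) (hdiv : ¬ Summable ψ) :
    ∀ᵐ a : UnitAddTorus (Fin 1),
      {x : Fin 1 → ℤ | cone 1 x ∧ ‖torusForm x a‖ ≤ ψ (Hgt x)}.Infinite := by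
  have heval : MeasurePreserving (Function.eval (0 : Fin 1) : UnitAddTorus (Fin 1) → _) :=
    measurePreserving_eval (fun _ => volume) 0
  have hinj : Function.Injective fun (q : ℕ) (_ : Fin 1) => (q : ℤ) := fun q r hqr =>
    Nat.cast_injective (congrFun hqr 0)
  filter_upwards [heval.quasiMeasurePreserving.ae (ae_infinite_norm_nsmul_le hψ0 hψ hhalf hdiv)]
    with a ha
  refine (ha.image hinj.injOn).mono ?_
  rintro _ ⟨q, ⟨hq, hqa⟩, rfl⟩
  have hcone : cone 1 fun _ : Fin 1 => (q : ℤ) := cone_one_iff.2 ⟨by simpa using hq, finZeroElim⟩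
  refine ⟨hcone, ?_⟩
  rw [Hgt_eq_of_cone_one hcone, Int.natAbs_natCast, torusForm_apply, Fin.sum_univ_one,
    natCast_zsmul]
  exact hqa

theorem ae_infinite_torusForm {m : ℕ} {ψ : ℕ → ℝ} (hψ0 : ∀ h, 0 ≤ ψ h) (hψ : Antitone ψ)
    (hdiv : ¬ Summable fun h : ℕ => (h : ℝ) ^ m * ψ h) :
    ∀ᵐ a : UnitAddTorus (Fin (m + 1)),
      {x : Fin (m + 1) → ℤ | cone 1 x ∧ ‖torusForm x a‖ ≤ ψ (Hgt x)}.Infinite := by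
  have hmin0 (h : ℕ) : 0 ≤ min (ψ h) (1 / 2) := le_min (hψ0 h) one_half_pos.le
  have hmin : Antitone fun h => min (ψ h) (1 / 2) := hψ.min antitone_const
  have hhalf (h : ℕ) : min (ψ h) (1 / 2) ≤ 1 / 2 := min_le_right _ _
  have hdiv_min := not_summable_pow_mul_min hψ one_half_pos hdiv
  suffices hsuff : ∀ᵐ a : UnitAddTorus (Fin (m + 1)), {x : Fin (m + 1) → ℤ |
      cone 1 x ∧ ‖torusForm x a‖ ≤ min (ψ (Hgt x)) (1 / 2)}.Infinite by
    filter_upwards [hsuff] with a ha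
    exact ha.mono fun x hx => ⟨hx.1, hx.2.trans (min_le_left _ _)⟩
  cases m with
  | zero =>
    simp only [pow_zero, one_mul] at hdiv_min
    exact ae_infinite_torusForm_fin_one hmin0 hmin hhalf hdiv_min
  | succ m => exact ae_infinite_torusForm_of_two_le_dim hmin0 hmin hhalf hdiv_min

end KhintchineGroshev

theorem khintchine_groshev_restricted_divergence (n ℓ : ℕ) (hℓ : 1 ≤ ℓ) (hn : ℓ ≤ n)
    (ψ : ℕ → ℝ) (hpos : ∀ h, 0 < ψ h) (hmono : Antitone ψ)
    (hdiv : ¬ Summable fun h : ℕ => (h : ℝ) ^ (n - 1) * ψ h) :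
    volume {α : Fin n → ℝ | {x : Fin n → ℤ | cone ℓ x ∧
      dnint (∑ i, (x i : ℝ) * α i) ≤ ψ (Hgt x)}.Infinite}ᶜ = 0 := by
  obtain ⟨m, rfl⟩ := Nat.exists_eq_add_of_le' (hℓ.trans hn)
  rw [Nat.add_sub_cancel] at hdiv
  have htorus := ae_infinite_torusForm (fun h => (hpos h).le) hmono hdiv
  refine mem_ae_iff.1 ?_
  filter_upwards [ae_coe_of_ae_unitAddTorus htorus] with α hα
  refine hα.mono fun x hx => ⟨cone_mono hℓ hx.1, ?_⟩
  rw [← norm_torusForm_coe]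
  exact hx.2
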